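/- Let p be a prime, m a positive integer, and b an integer with 2 ≤ b ≤ p. Consider cyclic codes of length p over 𝔽_{p^m} (the case e = 1). Then for every i with 0 ≤ i ≤ p − b, the cyclic code C_i = ⟨(x−1)^i⟩ ⊆ 𝔽_{p^m}[x]/⟨x^p−1⟩ satisfies d_b(C_i) = i + b. -/

import Mathlib

open Polynomial

/-- The `b`-symbol read vector of `x ∈ Ξ^n`: its `i`-th entry is the `b`-tuple
`(x_i, x_{i+1}, …, x_{i+b-1})`, indices modulo `n`. -/
def piB {Ξ : Type*} {n : ℕ} (b : ℕ) (x : Fin n → Ξ) : Fin n → (Fin b → Ξ) :=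
  fun i j => x ⟨((i : ℕ) + (j : ℕ)) % n, Nat.mod_lt _ i.pos⟩

/-- The cyclic code `C_i = ⟨(x-1)^i⟩ ⊆ 𝔽_{p^m}[x]/⟨x^{p^e}-1⟩` of length `p^e`
over `𝔽_{p^m}`, viewed as the set of coefficient vectors `c ∈ 𝔽_{p^m}^{p^e}`
whose associated polynomial is congruent to a multiple of `(x-1)^i` modulo
`x^{p^e} - 1`. -/
noncomputable def Ccode (p m e : ℕ) [Fact p.Prime] (i : ℕ) :
    Set (Fin (p ^ e) → GaloisField p m) :=
  {c | ∃ f : Polynomial (GaloisField p m),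
    (X ^ (p ^ e) - 1 : Polynomial (GaloisField p m)) ∣
      ((∑ j : Fin (p ^ e), Polynomial.C (c j) * X ^ (j : ℕ)) - (X - 1) ^ i * f)}

/-- The minimum `b`-symbol distance of a code `C ⊆ F^n`. -/
noncomputable def dBcode {F : Type*} {n : ℕ} (b : ℕ) (Cc : Set (Fin n → F)) : ℕ :=
  letI := Classical.decEq F
  sInf {d | ∃ x ∈ Cc, ∃ y ∈ Cc, x ≠ y ∧ d = hammingDist (piB b x) (piB b y)}

/-!
In characteristic `p` we have `X ^ p - 1 = (X - 1) ^ p`, so `C_i` consists of the polynomials of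
degree less than `p` divisible by `(X - 1) ^ i`. The operator `X * f' - k * f` removes the term of
degree `k` from `f` and keeps all other terms, while it lowers the multiplicity of the root `1` by
at most one; hence a nonzero codeword has more than `i` nonzero coordinates.

If `S` is the set of coordinates where two words differ, their `b`-symbol read vectors differ
exactly on `S - {0, …, b - 1}`. The Cauchy-Davenport theorem then yields the lower bound, and it is
attained by `(X - 1) ^ i`, for which `S` lies in the interval `{0, …, i}`.
-/

open scoped Finset Pointwise Fin.CommRing

section SparsePolynomial

variable {R : Type*} [CommRing R]

theorem coeff_X_mul_derivative_sub (f : R[X]) (k j : ℕ) :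
    (X * derivative f - (k : R[X]) * f).coeff j = ((j : R) - k) * f.coeff j := by
  rw [coeff_sub, coeff_natCast_mul]
  cases j with
  | zero => simp
  | succ j => rw [coeff_X_mul, coeff_derivative]; push_cast; ring

theorem pow_dvd_X_mul_derivative_sub {f q : R[X]} {n : ℕ} (h : q ^ (n + 1) ∣ f) (k : ℕ) :
    q ^ n ∣ X * derivative f - (k : R[X]) * f :=
  dvd_sub ((pow_sub_one_dvd_derivative_of_pow_dvd h).mul_left X)
    (((pow_dvd_pow q n.le_succ).trans h).mul_left _)

variable [NoZeroDivisors R]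

theorem support_X_mul_derivative_sub {f : R[X]} {k : ℕ} (hk : k ∈ f.support)
    (hf : Set.InjOn (Nat.cast : ℕ → R) f.support) :
    (X * derivative f - (k : R[X]) * f).support = f.support.erase k := by
  ext j
  rw [mem_support_iff, coeff_X_mul_derivative_sub, mul_ne_zero_iff, sub_ne_zero,
    Finset.mem_erase, ← mem_support_iff]
  exact and_congr_left fun hj => (hf.eq_iff hj hk).not

theorem not_isRoot_of_support_eq_singleton {f : R[X]} {k : ℕ} (hf : f.support = {k}) {a : R}
    (ha : a ≠ 0) : ¬f.IsRoot a := by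
  have hk : f.coeff k ≠ 0 := mem_support_iff.mp (hf ▸ Finset.mem_singleton_self k)
  rw [IsRoot, eval_eq_sum, sum_def, hf, Finset.sum_singleton]
  exact mul_ne_zero hk (pow_ne_zero k ha)

/-- The injectivity hypothesis holds in characteristic zero and, in characteristic `p`, whenever
`f` has degree less than `p`. -/
theorem lt_card_support_of_X_sub_C_pow_dvd {a : R} (ha : a ≠ 0) {n : ℕ} {f : R[X]} (hf₀ : f ≠ 0)
    (hf : Set.InjOn (Nat.cast : ℕ → R) f.support) (hdvd : (X - C a) ^ n ∣ f) :
    n < #f.support := by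
  induction n generalizing f with
  | zero => exact Finset.card_pos.mpr (support_nonempty.mpr hf₀)
  | succ n ih =>
    obtain ⟨k, hk⟩ := support_nonempty.mpr hf₀
    set g := X * derivative f - (k : R[X]) * f
    have hg_support : g.support = f.support.erase k := support_X_mul_derivative_sub hk hf
    have hg₀ : g ≠ 0 := by
      intro hg
      have hf_support : f.support = {k} := by
        rw [← Finset.insert_erase hk, ← hg_support, hg, support_zero, insert_empty_eq]
      exact not_isRoot_of_support_eq_singleton hf_support ha
        (dvd_iff_isRoot.mp ((dvd_pow_self _ n.succ_ne_zero).trans hdvd))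
    have hg : Set.InjOn (Nat.cast : ℕ → R) g.support :=
      hf.mono (by rw [hg_support]; exact Finset.erase_subset k _)
    calc n + 1 < #g.support + 1 :=
          Nat.succ_lt_succ (ih hg₀ hg (pow_dvd_X_mul_derivative_sub hdvd k))
      _ = #f.support := by rw [hg_support, Finset.card_erase_add_one hk]

end SparsePolynomial

theorem cauchy_davenport_fin {p : ℕ} [NeZero p] (hp : p.Prime) {s t : Finset (Fin p)}
    (hs : s.Nonempty) (ht : t.Nonempty) : min p (#s + #t - 1) ≤ #(s + t) := by
  cases p with
  | zero => exact absurd hp Nat.not_prime_zero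
  | succ p => exact ZMod.cauchy_davenport hp hs ht

theorem min_le_card_image_natCast_range (n b : ℕ) [NeZero n] :
    min n b ≤ #((Finset.range b).image (Nat.cast : ℕ → Fin n)) := by
  have hinj : Set.InjOn (Nat.cast : ℕ → Fin n) (Finset.range (min n b)) :=
    (CharP.natCast_injOn_Iio (Fin n) n).mono fun _ hj =>
      (Finset.mem_range.mp hj).trans_le (min_le_left n b)
  rw [← Finset.card_range (min n b), ← Finset.card_image_of_injOn hinj]
  exact Finset.card_le_card (Finset.image_subset_image (Finset.range_mono (min_le_right n b)))

section ReadVector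

variable {Ξ : Type*} {n : ℕ}

theorem piB_apply [NeZero n] (b : ℕ) (x : Fin n → Ξ) (a : Fin n) (j : Fin b) :
    piB b x a j = x (a + (j : ℕ)) :=
  congrArg x (Fin.ext (by simp [Fin.val_add]))

variable [DecidableEq Ξ]

theorem filter_piB_ne [NeZero n] (b : ℕ) (x y : Fin n → Ξ) :
    ({a | piB b x a ≠ piB b y a} : Finset (Fin n)) =
      ({a | x a ≠ y a} : Finset (Fin n)) - (Finset.range b).image Nat.cast := by
  ext a
  simp only [Finset.mem_filter_univ, Finset.mem_sub, Finset.exists_mem_image, Finset.mem_range,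
    Function.ne_iff, piB_apply]
  constructor
  · rintro ⟨j, hj⟩
    exact ⟨_, hj, j, j.isLt, add_sub_cancel_right _ _⟩
  · rintro ⟨s, hs, j, hj, rfl⟩
    exact ⟨⟨j, hj⟩, by simpa using hs⟩

theorem hammingDist_piB_le_add [NeZero n] (b : ℕ) {x y : Fin n → Ξ} {i : ℕ}
    (hxy : ∀ a : Fin n, i < a → x a = y a) : hammingDist (piB b x) (piB b y) ≤ i + b := by
  have hsub : ({a | piB b x a ≠ piB b y a} : Finset (Fin n)) ⊆
      (Finset.range (i + b)).image fun k : ℕ => (k : Fin n) - ((b - 1 : ℕ) : Fin n) := by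
    rw [filter_piB_ne]
    intro a ha
    simp only [Finset.mem_sub, Finset.exists_mem_image, Finset.mem_filter_univ,
      Finset.mem_range] at ha
    obtain ⟨s, hs, j, hj, rfl⟩ := ha
    have hsi : (s : ℕ) ≤ i := not_lt.mp (mt (hxy s) hs)
    -- `s - j = (s + (b - 1 - j)) - (b - 1)`, where `0 ≤ s + (b - 1 - j) < i + b`.
    refine Finset.mem_image.mpr ⟨s + (b - 1 - j), Finset.mem_range.mpr (by omega), ?_⟩
    rw [Nat.cast_add, Nat.cast_sub (by omega), Fin.cast_val_eq_self]
    ring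
  exact (Finset.card_le_card hsub).trans (Finset.card_image_le.trans (Finset.card_range _).le)

theorem min_le_hammingDist_piB {p : ℕ} (hp : p.Prime) {b : ℕ} (hb : 0 < b) {x y : Fin p → Ξ}
    (hxy : x ≠ y) :
    min p (hammingDist x y + b - 1) ≤ hammingDist (piB b x) (piB b y) := by
  have : NeZero p := ⟨hp.ne_zero⟩
  have hpos : 0 < hammingDist x y := hammingDist_pos.mpr hxy
  set S : Finset (Fin p) := {a | x a ≠ y a}
  set B : Finset (Fin p) := (Finset.range b).image Nat.cast
  have hB : min p b ≤ #B := min_le_card_image_natCast_range p b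
  have hB_nonempty : (-B).Nonempty :=
    ((Finset.nonempty_range_iff.mpr hb.ne').image _).neg
  calc min p (hammingDist x y + b - 1) ≤ min p (hammingDist x y + #B - 1) := by omega
    _ = min p (#S + #(-B) - 1) := by rw [Finset.card_neg]; rfl
    _ ≤ #(S + -B) := cauchy_davenport_fin hp (Finset.card_pos.mp hpos) hB_nonempty
    _ = hammingDist (piB b x) (piB b y) := by
      rw [← sub_eq_add_neg, ← filter_piB_ne]; rfl

end ReadVector

section MinimumDistance

variable {F : Type*} [DecidableEq F] {n b d : ℕ} {K : Set (Fin n → F)}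

theorem dBcode_le {x y : Fin n → F} (hx : x ∈ K) (hy : y ∈ K) (hxy : x ≠ y) :
    dBcode b K ≤ hammingDist (piB b x) (piB b y) := by
  rw [dBcode]
  exact Nat.sInf_le ⟨x, hx, y, hy, hxy, by congr!⟩

theorem le_dBcode (hK : K.Nontrivial)
    (h : ∀ x ∈ K, ∀ y ∈ K, x ≠ y → d ≤ hammingDist (piB b x) (piB b y)) : d ≤ dBcode b K := by
  obtain ⟨x, hx, y, hy, hxy⟩ := hK
  rw [dBcode]
  refine le_csInf ⟨_, x, hx, y, hy, hxy, rfl⟩ ?_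
  rintro _ ⟨u, hu, v, hv, huv, rfl⟩
  exact (h u hu v hv huv).trans_eq (by congr!)

end MinimumDistance

theorem card_support_ofFn {R : Type*} [Semiring R] [DecidableEq R] {n : ℕ} (v : Fin n → R) :
    #(ofFn n v).support = hammingNorm v := by
  have hsupport : (ofFn n v).support = ({a | v a ≠ 0} : Finset (Fin n)).map Fin.valEmbedding := by
    ext k
    by_cases hk : k < n
    · simp only [mem_support_iff, ofFn_coeff_eq_val_of_lt v hk, Finset.mem_map,
        Finset.mem_filter_univ, Fin.valEmbedding_apply]
      exact ⟨fun h => ⟨⟨k, hk⟩, h, rfl⟩, by rintro ⟨a, ha, rfl⟩; exact ha⟩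
    · simp only [mem_support_iff, ofFn_coeff_eq_zero_of_ge v (not_lt.mp hk), ne_eq,
        not_true_eq_false, false_iff, Finset.mem_map, not_exists, not_and]
      rintro a - rfl
      exact hk a.isLt
  rw [hsupport, Finset.card_map]
  rfl

theorem natDegree_X_sub_one_pow_le {R : Type*} [Ring R] (i : ℕ) :
    ((X - 1 : R[X]) ^ i).natDegree ≤ i := by
  simpa using natDegree_pow_le_of_le i (natDegree_X_sub_C_le (1 : R))

theorem ofFn_toFn_X_sub_one_pow {R : Type*} [Ring R] [DecidableEq R] {n i : ℕ} (hi : i < n) :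
    ofFn n (toFn n ((X - 1 : R[X]) ^ i)) = (X - 1) ^ i :=
  ofFn_comp_toFn_eq_id_of_natDegree_lt ((natDegree_X_sub_one_pow_le i).trans_lt hi)

section CyclicCode

variable {R : Type*} [CommRing R]

variable (R) in
/-- The cyclic code `⟨(x-1)^i⟩ ⊆ R[x]/⟨x^n-1⟩` of length `n` over an arbitrary commutative ring, as
a set of coefficient vectors. For `R = 𝔽_{p^m}` and `n = p^e` it is `Ccode p m e i`. -/
def cyclicCode (n i : ℕ) : Set (Fin n → R) :=
  {c | ∃ f : R[X], X ^ n - 1 ∣ (∑ j : Fin n, C (c j) * X ^ (j : ℕ)) - (X - 1) ^ i * f}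

variable [DecidableEq R]

theorem mem_cyclicCode_iff {n i : ℕ} (h : (X - 1 : R[X]) ^ i ∣ X ^ n - 1) {c : Fin n → R} :
    c ∈ cyclicCode R n i ↔ (X - 1) ^ i ∣ ofFn n c := by
  simp only [cyclicCode, Set.mem_ofPred_eq, C_mul_X_pow_eq_monomial, ← ofFn_eq_sum_monomial]
  constructor
  · rintro ⟨f, hf⟩
    exact (dvd_sub_left (dvd_mul_right _ f)).mp (h.trans hf)
  · rintro ⟨f, hf⟩
    exact ⟨f, by simp [hf]⟩

variable {p : ℕ} [Fact p.Prime] [CharP R p] {i : ℕ}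

theorem mem_cyclicCode_prime_iff (hi : i ≤ p) {c : Fin p → R} :
    c ∈ cyclicCode R p i ↔ (X - 1) ^ i ∣ ofFn p c := by
  refine mem_cyclicCode_iff ?_
  rw [← one_pow (M := R[X]) p, ← sub_pow_char, one_pow]
  exact pow_dvd_pow _ hi

theorem lt_hammingDist_of_mem_cyclicCode [IsDomain R] (hi : i ≤ p) {x y : Fin p → R}
    (hx : x ∈ cyclicCode R p i) (hy : y ∈ cyclicCode R p i) (hxy : x ≠ y) :
    i < hammingDist x y := by
  rw [mem_cyclicCode_prime_iff hi] at hx hy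
  have hdvd : (X - C 1) ^ i ∣ ofFn p (y - x) := by
    rw [C_1, map_sub]
    exact dvd_sub hy hx
  have hne : ofFn p (y - x) ≠ 0 :=
    (map_ne_zero_iff _ (injective_ofFn p)).mpr (sub_ne_zero.mpr hxy.symm)
  have hinj : Set.InjOn (Nat.cast : ℕ → R) (ofFn p (y - x)).support :=
    (CharP.natCast_injOn_Iio R p).mono fun j hj =>
      not_le.mp (mt (ofFn_coeff_eq_zero_of_ge _) (mem_support_iff.mp hj))
  rw [hammingDist_eq_hammingNorm, neg_add_eq_sub, ← card_support_ofFn]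
  exact lt_card_support_of_X_sub_C_pow_dvd one_ne_zero hne hinj hdvd

end CyclicCode

theorem b_distance_length_p_general (R : Type*) [CommRing R] [IsDomain R] (p : ℕ) [Fact p.Prime]
    [CharP R p] {b : ℕ} (hb : 0 < b) {i : ℕ} (hi : i < p) :
    dBcode b (cyclicCode R p i) = min p (i + b) := by
  classical
  set w : Fin p → R := toFn p ((X - 1) ^ i)
  have hw_poly : ofFn p w = (X - C 1) ^ i := by rw [ofFn_toFn_X_sub_one_pow hi, C_1]
  have hw : w ∈ cyclicCode R p i := by rw [mem_cyclicCode_prime_iff hi.le, hw_poly, C_1]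
  have hzero : (0 : Fin p → R) ∈ cyclicCode R p i := ⟨0, by simp⟩
  have hw₀ : w ≠ 0 := (map_ne_zero_iff _ (injective_ofFn p)).mp <| by
    rw [hw_poly]
    exact pow_ne_zero i (X_sub_C_ne_zero 1)
  have hw_supp (a : Fin p) (ha : i < a) : w a = 0 :=
    coeff_eq_zero_of_natDegree_lt ((natDegree_X_sub_one_pow_le i).trans_lt ha)
  apply le_antisymm
  · refine (dBcode_le hw hzero hw₀).trans (le_min ?_ (hammingDist_piB_le_add b hw_supp))
    exact hammingDist_le_card_fintype.trans_eq (Fintype.card_fin p)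
  · refine le_dBcode ⟨w, hw, 0, hzero, hw₀⟩ fun x hx y hy hxy => ?_
    have hweight : i < hammingDist x y := lt_hammingDist_of_mem_cyclicCode hi.le hx hy hxy
    exact (min_le_min_left p (by omega)).trans (min_le_hammingDist_piB Fact.out hb hxy)

/-- For `2 ≤ b ≤ p` and `0 ≤ i ≤ p - b`, the cyclic code
`C_i = ⟨(x-1)^i⟩ ⊆ 𝔽_{p^m}[x]/⟨x^p-1⟩` of length `p` (the case `e = 1`)
satisfies `d_b(C_i) = i + b`. -/
theorem b_distance_length_p (p m : ℕ) [Fact p.Prime] (hm : 0 < m)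
    (b : ℕ) (hb2 : 2 ≤ b) (hb : b ≤ p) (i : ℕ) (hi : i ≤ p - b) :
    dBcode b (Ccode p m 1 i) = i + b := by
  change dBcode b (cyclicCode (GaloisField p m) (p ^ 1) i) = i + b
  rw [pow_one, b_distance_length_p_general _ p (by omega) (by omega), min_eq_right (by omega)]
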